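/- The elliptic dynamical R-matrix satisfies the unitarity relation R^{(12)}(z,λ) R^{(21)}(-z,λ) = Id on ℂ^N ⊗ ℂ^N, for all z ∈ ℂ and λ ∈ ℂ^N at which every theta factor in a denominator is nonzero, where R^{(21)}(w,λ) = P R(w,λ) P with P = ∑_{i,j=1}^N e_{ij}⊗e_{ji} the flip operator. -/

import Mathlib

/-! Unitarity is a family of `2 × 2` identities, one for each pair `e_i ⊗ e_j`, `e_j ⊗ e_i` with
`i ≠ j`. The off-diagonal entries cancel because `θ` is odd (`theta_neg`). The diagonal entries
amount to the three-term identity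
`θ(z)² θ(w+γ) θ(w-γ) - θ(γ)² θ(w+z) θ(w-z) = θ(w)² θ(z+γ) θ(z-γ)` (`theta_three_term`).

The three-term identity comes from the duplication formula
`θ(x+y) θ(x-y) = E(x) O(y) - O(x) E(y)` (`theta_add_mul_theta_sub`), where `E` and `O` are theta
functions of modulus `2τ` summed over the even and the odd integers. Multiplying out the two series
for `θ` with indices `j, k` and putting `m = j + k + 1`, `n = j - k`, the summand factors into a
function of `m` and `x` times a function of `n` and `y`, with `m` and `n` of opposite parity; the
two possible parities give the two products. The right-hand side is a `2 × 2` determinant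
`[x, y]`, and the three-term identity is the Plücker relation among the vectors `(E, O)` at
`z`, `w`, `γ`, `0`. -/

noncomputable section

open Complex BigOperators

namespace Ruijsenaars

/-- Jacobi's first theta function
`θ(z) = -∑_{j∈ℤ} exp(πi(j+1/2)²τ + 2πi(j+1/2)(z+1/2))`. -/
def theta (τ z : ℂ) : ℂ :=
  - ∑' j : ℤ, Complex.exp (Real.pi * Complex.I * ((j : ℂ) + 1 / 2) ^ 2 * τ +
      2 * Real.pi * Complex.I * ((j : ℂ) + 1 / 2) * (z + 1 / 2))

/-- `α(z,w) = θ(z)θ(w+γ)/(θ(z-γ)θ(w))`. -/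
def alpha (τ γ z w : ℂ) : ℂ :=
  theta τ z * theta τ (w + γ) / (theta τ (z - γ) * theta τ w)

/-- `β(z,w) = -θ(z+w)θ(γ)/(θ(z-γ)θ(w))`. -/
def beta (τ γ z w : ℂ) : ℂ :=
  - (theta τ (z + w) * theta τ γ / (theta τ (z - γ) * theta τ w))

/-- The elliptic dynamical R-matrix `R(z,λ)` on `ℂ^N ⊗ ℂ^N`,
`R(z,λ) = ∑_i e_{ii}⊗e_{ii} + ∑_{i≠j} α(z,λ_i-λ_j) e_{ii}⊗e_{jj}
        + ∑_{i≠j} β(z,λ_i-λ_j) e_{ij}⊗e_{ji}`,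
written as a matrix on the standard basis of `ℂ^N ⊗ ℂ^N`: the entry at row `(i,j)`,
column `(k,l)` is the coefficient `R_{ik,jl}(z,λ)` of `e_{ik} ⊗ e_{jl}`. -/
def Rm (τ γ : ℂ) {N : ℕ} (z : ℂ) (lam : Fin N → ℂ) :
    Matrix (Fin N × Fin N) (Fin N × Fin N) ℂ := fun p q =>
  if p = q then (if p.1 = p.2 then 1 else alpha τ γ z (lam p.1 - lam p.2))
  else if p.1 = q.2 ∧ p.2 = q.1 then beta τ γ z (lam p.1 - lam p.2) else 0

/-- The shift `λ ↦ λ - γ ω_j` by the `j`-th standard basis vector. -/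
def shift1 (γ : ℂ) {N : ℕ} (lam : Fin N → ℂ) (j : Fin N) : Fin N → ℂ :=
  fun i => lam i - if i = j then γ else 0

/-- `R^{(21)}(z,λ) = P R(z,λ) P`, where `P` is the flip operator. -/
def Rm21 (τ γ : ℂ) {N : ℕ} (z : ℂ) (lam : Fin N → ℂ) :
    Matrix (Fin N × Fin N) (Fin N × Fin N) ℂ := fun p q =>
  Rm τ γ z lam (p.2, p.1) (q.2, q.1)

/-- The `j`-th summand of the series for `-θ(z)`. -/
def thetaTerm (τ z : ℂ) (j : ℤ) : ℂ :=
  Complex.exp (Real.pi * Complex.I * ((j : ℂ) + 1 / 2) ^ 2 * τ +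
    2 * Real.pi * Complex.I * ((j : ℂ) + 1 / 2) * (z + 1 / 2))

/-- The summand `exp(πi m²τ/2 + 2πi m x)` at the even integer `m = 2n`. -/
def evenTerm (τ x : ℂ) (n : ℤ) : ℂ :=
  Complex.exp (2 * Real.pi * Complex.I * τ * (n : ℂ) ^ 2 + 4 * Real.pi * Complex.I * n * x)

/-- The summand `exp(πi m²τ/2 + 2πi m x)` at the odd integer `m = 2n + 1`. -/
def oddTerm (τ x : ℂ) (n : ℤ) : ℂ :=
  Complex.exp (Real.pi * Complex.I * τ * (2 * (n : ℂ) + 1) ^ 2 / 2 +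
    2 * Real.pi * Complex.I * (2 * (n : ℂ) + 1) * x)

/-- `E(x) = ∑_{m even} exp(πi m²τ/2 + 2πi m x)`. -/
def evenTheta (τ x : ℂ) : ℂ := ∑' n : ℤ, evenTerm τ x n

/-- `O(x) = ∑_{m odd} exp(πi m²τ/2 + 2πi m x)`. -/
def oddTheta (τ x : ℂ) : ℂ := ∑' n : ℤ, oddTerm τ x n

lemma summable_thetaTerm {τ : ℂ} (hτ : 0 < τ.im) (z : ℂ) : Summable (thetaTerm τ z) := by
  have h := ((summable_jacobiTheta₂_term_iff (z + 1 / 2 + τ / 2) τ).2 hτ).mul_left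
    (Complex.exp (Real.pi * Complex.I * (τ / 4 + (z + 1 / 2))))
  refine h.congr fun j => ?_
  rw [thetaTerm, jacobiTheta₂_term, ← Complex.exp_add]
  congr 1
  ring

lemma summable_evenTerm {τ : ℂ} (hτ : 0 < τ.im) (x : ℂ) : Summable (evenTerm τ x) := by
  have h := (summable_jacobiTheta₂_term_iff (2 * x) (2 * τ)).2 (by simpa using hτ)
  refine h.congr fun j => ?_
  rw [evenTerm, jacobiTheta₂_term]
  congr 1
  ring

lemma summable_oddTerm {τ : ℂ} (hτ : 0 < τ.im) (x : ℂ) : Summable (oddTerm τ x) := by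
  have h := ((summable_jacobiTheta₂_term_iff (2 * x + τ) (2 * τ)).2 (by simpa using hτ)).mul_left
    (Complex.exp (Real.pi * Complex.I * (τ / 2 + 2 * x)))
  refine h.congr fun j => ?_
  rw [oddTerm, jacobiTheta₂_term, ← Complex.exp_add]
  congr 1
  ring

lemma hasSum_mul_prod {f g : ℤ → ℂ} (hf : Summable f) (hg : Summable g) :
    HasSum (fun p : ℤ × ℤ => f p.1 * g p.2) ((∑' n, f n) * ∑' n, g n) :=
  hf.hasSum.mul hg.hasSum (summable_mul_of_summable_norm hf.norm hg.norm)

lemma exp_eq_of_eq_add {u v : ℂ} (n : ℤ) (h : u = v + n * (2 * Real.pi * Complex.I)) :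
    Complex.exp u = Complex.exp v :=
  Complex.exp_eq_exp_iff_exists_int.2 ⟨n, h⟩

lemma exp_eq_neg_of_eq_add {u v : ℂ} (n : ℤ)
    (h : u = v + Real.pi * Complex.I + n * (2 * Real.pi * Complex.I)) :
    Complex.exp u = -Complex.exp v := by
  rw [exp_eq_of_eq_add n h, Complex.exp_add, Complex.exp_pi_mul_I, mul_neg_one]

/-- The summands with `j + k + 1 = 2a` even and `j - k = 2b + 1` odd. -/
lemma thetaTerm_mul_even_odd (τ x y : ℂ) (a b : ℤ) :
    thetaTerm τ (x + y) (a + b) * thetaTerm τ (x - y) (a - b - 1) =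
      evenTerm τ x a * oddTerm τ y b := by
  rw [thetaTerm, thetaTerm, evenTerm, oddTerm, ← Complex.exp_add, ← Complex.exp_add]
  refine exp_eq_of_eq_add a ?_
  push_cast
  ring

/-- The summands with `j + k + 1 = 2a + 1` odd and `j - k = 2b` even. -/
lemma thetaTerm_mul_odd_even (τ x y : ℂ) (a b : ℤ) :
    thetaTerm τ (x + y) (a + b) * thetaTerm τ (x - y) (a - b) =
      -(oddTerm τ x a * evenTerm τ y b) := by
  rw [thetaTerm, thetaTerm, evenTerm, oddTerm, ← Complex.exp_add, ← Complex.exp_add]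
  refine exp_eq_neg_of_eq_add a ?_
  push_cast
  ring

lemma theta_eq (τ z : ℂ) : theta τ z = -∑' j : ℤ, thetaTerm τ z j := rfl

/-- The duplication formula, splitting the double series according to the parity of `j - k`. -/
lemma theta_add_mul_theta_sub {τ : ℂ} (hτ : 0 < τ.im) (x y : ℂ) :
    theta τ (x + y) * theta τ (x - y) =
      evenTheta τ x * oddTheta τ y - oddTheta τ x * evenTheta τ y := by
  let F : ℤ × ℤ → ℂ := fun p => thetaTerm τ (x + y) p.1 * thetaTerm τ (x - y) p.2
  have h : HasSum F _ := hasSum_mul_prod (summable_thetaTerm hτ (x + y))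
    (summable_thetaTerm hτ (x - y))
  let φ : ℤ × ℤ → ℤ × ℤ := fun p => (p.1 + p.2, p.1 - p.2 - 1)
  let ψ : ℤ × ℤ → ℤ × ℤ := fun p => (p.1 + p.2, p.1 - p.2)
  have hφ : Function.Injective φ := by
    rintro ⟨a, b⟩ ⟨c, d⟩ h
    simp only [φ, Prod.mk.injEq] at h ⊢
    omega
  have hψ : Function.Injective ψ := by
    rintro ⟨a, b⟩ ⟨c, d⟩ h
    simp only [ψ, Prod.mk.injEq] at h ⊢
    omega
  have hcompl : IsCompl (Set.range φ) (Set.range ψ) := by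
    constructor
    · rw [Set.disjoint_left]
      rintro _ ⟨⟨a, b⟩, rfl⟩ ⟨⟨c, d⟩, h⟩
      simp only [φ, ψ, Prod.mk.injEq] at h
      omega
    · rw [codisjoint_iff]
      refine Set.eq_univ_of_forall ?_
      rintro ⟨j, k⟩
      rcases Int.even_or_odd' (j - k) with ⟨b, hb | hb⟩
      · right
        refine ⟨(j - b, b), ?_⟩
        simp only [ψ, Prod.mk.injEq]
        omega
      · left
        refine ⟨(j - b, b), ?_⟩
        simp only [φ, Prod.mk.injEq]
        omega
  have h₁ : HasSum (F ∘ φ) (evenTheta τ x * oddTheta τ y) :=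
    (hasSum_mul_prod (summable_evenTerm hτ x) (summable_oddTerm hτ y)).congr_fun
      fun p => thetaTerm_mul_even_odd τ x y p.1 p.2
  have h₂ : HasSum (F ∘ ψ) (-(oddTheta τ x * evenTheta τ y)) :=
    (hasSum_mul_prod (summable_oddTerm hτ x) (summable_evenTerm hτ y)).neg.congr_fun
      fun p => thetaTerm_mul_odd_even τ x y p.1 p.2
  have h' := HasSum.add_isCompl hcompl (hφ.hasSum_range_iff.2 h₁) (hψ.hasSum_range_iff.2 h₂)
  rw [theta_eq, theta_eq, neg_mul_neg, h.unique h', sub_eq_add_neg]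

lemma theta_neg (τ z : ℂ) : theta τ (-z) = -theta τ z := by
  rw [theta_eq, theta_eq]
  congr 1
  -- The reflection `j ↦ -1 - j` sends `j + 1/2` to its negative.
  rw [← (Equiv.subLeft (-1 : ℤ)).tsum_eq (thetaTerm τ (-z)), ← tsum_neg]
  refine tsum_congr fun j => ?_
  rw [Equiv.subLeft_apply, thetaTerm, thetaTerm]
  refine exp_eq_neg_of_eq_add (-j - 1) ?_
  push_cast
  ring

lemma theta_three_term {τ : ℂ} (hτ : 0 < τ.im) (z w γ : ℂ) :
    theta τ z ^ 2 * (theta τ (w + γ) * theta τ (w - γ)) -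
      theta τ γ ^ 2 * (theta τ (w + z) * theta τ (w - z)) =
    theta τ w ^ 2 * (theta τ (z + γ) * theta τ (z - γ)) := by
  -- The squares are the case `y = 0` of the duplication formula.
  have hsq (x : ℂ) : theta τ x ^ 2 =
      evenTheta τ x * oddTheta τ 0 - oddTheta τ x * evenTheta τ 0 := by
    rw [← theta_add_mul_theta_sub hτ, add_zero, sub_zero, sq]
  simp only [theta_add_mul_theta_sub hτ, hsq]
  ring

lemma alpha_beta_diag {τ γ z w : ℂ} (hτ : 0 < τ.im) (hz : theta τ (z - γ) ≠ 0)
    (hz' : theta τ (-z - γ) ≠ 0) (hw : theta τ w ≠ 0) :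
    alpha τ γ z w * alpha τ γ (-z) (-w) + beta τ γ z w * beta τ γ (-z) w = 1 := by
  have e₁ : theta τ (-z - γ) = -theta τ (z + γ) := by rw [← theta_neg]; congr 1; ring
  have e₂ : theta τ (-w + γ) = -theta τ (w - γ) := by rw [← theta_neg]; congr 1; ring
  have e₃ : theta τ (-z + w) = theta τ (w - z) := by congr 1; ring
  rw [e₁, neg_ne_zero] at hz'
  have key := theta_three_term hτ z w γ
  rw [add_comm w z] at key
  rw [alpha, alpha, beta, beta, e₁, e₂, e₃, theta_neg, theta_neg]
  field_simp
  linear_combination key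

lemma alpha_beta_offDiag {τ γ z w : ℂ} :
    alpha τ γ z w * beta τ γ (-z) (-w) + beta τ γ z w * alpha τ γ (-z) w = 0 := by
  have e : theta τ (-z + -w) = -theta τ (z + w) := by rw [← theta_neg]; congr 1; ring
  rw [alpha, alpha, beta, beta, e, theta_neg, theta_neg, mul_neg (theta τ (-z - γ)), neg_mul,
    neg_div_neg_eq]
  ring

/-- unitarity of the elliptic dynamical R-matrix,
`R^{(12)}(z,λ) R^{(21)}(-z,λ) = Id` on `ℂ^N ⊗ ℂ^N`, `N = M+2 ≥ 2`, at parameter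
values where every theta factor in a denominator is nonzero. -/
theorem statement1 (τ γ : ℂ) (hτ : 0 < τ.im) (M : ℕ) (z : ℂ)
    (lam : Fin (M + 2) → ℂ)
    (hz : theta τ (z - γ) ≠ 0) (hz' : theta τ (-z - γ) ≠ 0)
    (hlam : ∀ a b : Fin (M + 2), a ≠ b → theta τ (lam a - lam b) ≠ 0) :
    Rm τ γ z lam * Rm21 τ γ (-z) lam = 1 := by
  ext ⟨i, j⟩ ⟨k, l⟩
  rw [Matrix.mul_apply, Matrix.one_apply]
  by_cases hij : i = j
  · subst hij
    -- Row `(i, i)` of `R` is supported on the column `(i, i)`.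
    rw [Fintype.sum_eq_single (i, i)]
    · simp only [Rm, Rm21, Prod.mk.injEq]
      grind
    · rintro ⟨a, b⟩ hab
      simp only [Rm, Rm21, Prod.mk.injEq, ne_eq] at hab ⊢
      grind
  · have hd := alpha_beta_diag hτ hz hz' (hlam i j hij)
    have ho := alpha_beta_offDiag (τ := τ) (γ := γ) (z := z) (w := lam i - lam j)
    rw [neg_sub] at hd ho
    -- Row `(i, j)` of `R` is supported on the columns `(i, j)` and `(j, i)`.
    rw [Fintype.sum_eq_add (i, j) (j, i) (by simp [hij])]
    · simp only [Rm, Rm21, Prod.mk.injEq]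
      grind
    · rintro ⟨a, b⟩ hab
      simp only [Rm, Rm21, Prod.mk.injEq, ne_eq] at hab ⊢
      grind
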